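/- Let t be an even positive integer and let M be a matroid with an even t-cyclic ordering e_1, e_2, …, e_n. Then for every index i ∈ {1,…,n} and every j with 1 ≤ j ≤ n/2, the set X = {e_{i+1}, e_{i+2}, …, e_{i+j}} satisfies (with parity of indices taken modulo n, which is even): λ(X) = j if j ≤ t−1; λ(X) = t−2 if j > t−1, j is even and i is even; λ(X) = t−1 if j > t−1 and j is odd; and λ(X) = t if j > t−1, j is even and i is odd. -/

import Mathlib

open Set

namespace CyclicArr

variable {α : Type*}

/-- `C` is a circuit of the matroid `M`: a minimal dependent set. -/
def Cct (M : Matroid α) (C : Set α) : Prop := Minimal M.Dep C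

/-- The set of `len` consecutive elements `{e_i, e_{i+1}, …, e_{i+len-1}}`
in a cyclic ordering `e`, subscripts mod `n`. -/
def seg {n : ℕ} (e : ZMod n → α) (i : ℤ) (len : ℕ) : Set α :=
  (fun k : ℕ => e ((i + k : ℤ) : ZMod n)) '' Set.Iio len

/-- `e` is a cyclic ordering of (the ground set of) `M`. -/
def CyclicOrd {n : ℕ} (M : Matroid α) (e : ZMod n → α) : Prop :=
  Function.Injective e ∧ Set.range e = M.E

/-- `e` is a cyclic `(t-1, t)`-ordering of `M`: every `t-1` consecutive elements
are contained in a `t`-element circuit and a `t`-element cocircuit. -/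
def CyclicPropOrd {n : ℕ} (M : Matroid α) (t : ℕ) (e : ZMod n → α) : Prop :=
  CyclicOrd M e ∧
  ∀ i : ℤ, (∃ C, Cct M C ∧ C.ncard = t ∧ seg e i (t-1) ⊆ C) ∧
           (∃ C, Cct M✶ C ∧ C.ncard = t ∧ seg e i (t-1) ⊆ C)

/-- `M` has the cyclic `(t-1, t)`-property: it admits a cyclic `(t-1, t)`-ordering. -/
def HasCycProp (M : Matroid α) (t : ℕ) : Prop :=
  ∃ (n : ℕ) (e : ZMod n → α), CyclicPropOrd M t e

/-- `e` is an odd `t`-cyclic ordering of `M` (with `n ≥ t+1`): for all odd `i ∈ {1,…,n}`,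
`{e_i, …, e_{i+t-1}}` is a `t`-element circuit and `{e_{i+1}, …, e_{i+t}}` is a
`t`-element cocircuit. -/
def OddTCycOrd {n : ℕ} (M : Matroid α) (t : ℕ) (e : ZMod n → α) : Prop :=
  CyclicOrd M e ∧ t + 1 ≤ n ∧
  ∀ i : ℕ, Odd i → 1 ≤ i → i ≤ n →
    (Cct M (seg e (i : ℤ) t) ∧ (seg e (i : ℤ) t).ncard = t) ∧
    (Cct M✶ (seg e ((i : ℤ) + 1) t) ∧ (seg e ((i : ℤ) + 1) t).ncard = t)

/-- `e` is an even `t`-cyclic ordering of `M` (with `n ≥ t+1`): for all odd `i ∈ {1,…,n}`,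
`{e_i, …, e_{i+t-1}}` is both a `t`-element circuit and a `t`-element cocircuit. -/
def EvenTCycOrd {n : ℕ} (M : Matroid α) (t : ℕ) (e : ZMod n → α) : Prop :=
  CyclicOrd M e ∧ t + 1 ≤ n ∧
  ∀ i : ℕ, Odd i → 1 ≤ i → i ≤ n →
    Cct M (seg e (i : ℤ) t) ∧ Cct M✶ (seg e (i : ℤ) t) ∧ (seg e (i : ℤ) t).ncard = t

/-- `M` is `t`-cyclic: it admits an odd or even `t`-cyclic ordering. -/
def TCyclic (M : Matroid α) (t : ℕ) : Prop :=
  ∃ (n : ℕ) (e : ZMod n → α), OddTCycOrd M t e ∨ EvenTCycOrd M t e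

/-- The rank of a set `X` in a matroid `M`: the maximum cardinality of an
independent subset of `X` (for a finite matroid). -/
noncomputable def rkf (M : Matroid α) (X : Set α) : ℕ :=
  sSup {k | ∃ I, M.Indep I ∧ I ⊆ X ∧ I.ncard = k}

/-- The connectivity function `λ(X) = r(X) + r*(X) - |X|`, valued in `ℤ`. -/
noncomputable def lam (M : Matroid α) (X : Set α) : ℤ :=
  (rkf M X : ℤ) + (rkf M✶ X : ℤ) - (X.ncard : ℤ)

/-- The local connectivity `⊓(X, Y) = r(X) + r(Y) - r(X ∪ Y)`, valued in `ℤ`. -/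
noncomputable def pic (M : Matroid α) (X Y : Set α) : ℤ :=
  (rkf M X : ℤ) + (rkf M Y : ℤ) - (rkf M (X ∪ Y) : ℤ)

/-- `X` is exactly `k`-separating: `λ(X) = k - 1`. -/
noncomputable def ExactSep (M : Matroid α) (k : ℕ) (X : Set α) : Prop :=
  lam M X = (k : ℤ) - 1

/-- `(P_1, …, P_m)` is a concatenation of the cyclic ordering `e`, where `P i` is the
block of `l i` consecutive elements starting at position `a i`, and the blocks occur in
cyclic order and partition the ground set. -/
def IsConcat {n m : ℕ} (e : ZMod n → α) (P : ZMod m → Set α) (a l : ZMod m → ℕ) : Prop :=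
  (∀ i, 1 ≤ l i) ∧
  (∀ i, ((a (i + 1) : ZMod n)) = ((a i + l i : ℕ) : ZMod n)) ∧
  (∀ i, P i = seg e (a i : ℤ) (l i)) ∧
  Set.univ.PairwiseDisjoint P ∧
  (⋃ i, P i) = Set.range e

/-- `(P_1, …, P_m)` is a `k`-flower of `M`: a partition of the ground set into nonempty
sets, each exactly `k`-separating, with consecutive unions exactly `k`-separating. -/
noncomputable def IsFlower (M : Matroid α) (k : ℕ) {m : ℕ} (P : ZMod m → Set α) : Prop :=
  2 ≤ m ∧
  Set.univ.PairwiseDisjoint P ∧ (⋃ i, P i) = M.E ∧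
  (∀ i, (P i).Nonempty) ∧
  (∀ i, ExactSep M k (P i)) ∧
  (3 ≤ m → ∀ i, ExactSep M k (P i ∪ P (i + 1)))

/-- `I ⊆ ZMod m` is a set of consecutive members in the cyclic order. -/
def CycInterval {m : ℕ} (I : Set (ZMod m)) : Prop :=
  ∃ (a : ZMod m) (len : ℕ), 0 < len ∧ I = (fun k : ℕ => a + (k : ZMod m)) '' Set.Iio len

/-- A `k`-daisy: a `k`-flower in which the union of a proper nonempty collection of
petals is exactly `k`-separating precisely when the petals are consecutive. -/
noncomputable def IsDaisy (M : Matroid α) (k : ℕ) {m : ℕ} (P : ZMod m → Set α) : Prop :=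
  IsFlower M k P ∧
  ∀ I : Set (ZMod m), I.Nonempty → I ≠ Set.univ →
    (ExactSep M k (⋃ i ∈ I, P i) ↔ CycInterval I)

/-- A `k`-anemone: a `k`-flower in which the union of every proper nonempty collection
of petals is exactly `k`-separating. -/
noncomputable def IsAnemone (M : Matroid α) (k : ℕ) {m : ℕ} (P : ZMod m → Set α) : Prop :=
  IsFlower M k P ∧
  ∀ I : Set (ZMod m), I.Nonempty → I ≠ Set.univ → ExactSep M k (⋃ i ∈ I, P i)


lemma rkf_eq (N : Matroid α) (hE : N.E.Finite) (X : Set α) : (rkf N X : ℕ∞) = N.eRk X := by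
  obtain ⟨I, hI⟩ := N.exists_isBasis' X
  have hIf : I.Finite := hE.subset hI.indep.subset_ground
  have : rkf N X = I.ncard := by
    unfold rkf
    apply IsGreatest.csSup_eq
    refine ⟨⟨I, hI.indep, hI.subset, rfl⟩, ?_⟩
    rintro k ⟨J, hJ, hJX, rfl⟩
    have h := hJ.encard_le_eRk_of_subset hJX
    have hJf : J.Finite := hE.subset hJ.subset_ground
    rw [hI.eRk_eq_encard, ← hJf.cast_ncard_eq, ← hIf.cast_ncard_eq] at h
    exact_mod_cast h
  rw [this, hI.eRk_eq_encard, hIf.cast_ncard_eq]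

lemma rkf_indep (N : Matroid α) (hE : N.E.Finite) {X : Set α} (hX : N.Indep X) :
    rkf N X = X.ncard := by
  have h := rkf_eq N hE X
  rw [hX.eRk_eq_encard, ← (hE.subset hX.subset_ground).cast_ncard_eq] at h
  exact_mod_cast h

lemma rkf_insert_circuit (N : Matroid α) (hE : N.E.Finite) {X C : Set α} {x : α}
    (hC : N.IsCircuit C) (hx : x ∈ C) (hCX : C ⊆ insert x X) :
    rkf N (insert x X) = rkf N X := by
  have hcl : x ∈ N.closure X := mem_of_mem_of_subset
    (hC.mem_closure_sdiff_singleton_of_mem hx) (N.closure_subset_closure (by simpa using hCX))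
  have h1 := rkf_eq N hE X
  have h2 := rkf_eq N hE (insert x X)
  rw [← eRk_insert_closure_eq', insert_eq_of_mem hcl, N.eRk_closure_eq, ← h1] at h2
  exact_mod_cast h2
where
  eRk_insert_closure_eq' : N.eRk (insert x (N.closure X)) = N.eRk (insert x X) :=
    N.eRk_insert_closure_eq x X

lemma rkf_insert_cocircuit (N : Matroid α) (hE : N.E.Finite) {X K : Set α} {x : α}
    (hK : N✶.IsCircuit K) (hx : x ∈ K) (hKX : Disjoint X K) :
    rkf N (insert x X) = rkf N X + 1 := by
  have hxE : x ∈ N.E := hK.subset_ground hx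
  have hcl : x ∉ N.closure X := by
    intro hc
    obtain ⟨C, hCX, hC, hxC⟩ := Matroid.exists_isCircuit_of_mem_closure hc
      (fun h => hKX.le_bot ⟨h, hx⟩)
    apply hC.inter_isCocircuit_ne_singleton (e := x) hK
    ext y
    simp only [mem_inter_iff, mem_singleton_iff]
    constructor
    · rintro ⟨hy, hyK⟩
      rcases hCX hy with h | h
      · exact h
      · exact (hKX.le_bot ⟨h, hyK⟩).elim
    · rintro rfl
      exact ⟨hxC, hx⟩
  have h1 := rkf_eq N hE X
  have h2 := rkf_eq N hE (insert x X)
  rw [Matroid.eRk_insert_eq_add_one ⟨hxE, hcl⟩, ← h1] at h2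
  exact_mod_cast h2

section segs
variable {n : ℕ} (e : ZMod n → α)

lemma mem_seg {a : ℤ} {l : ℕ} {x : ℤ} (h1 : a ≤ x) (h2 : x < a + l) :
    e (x : ZMod n) ∈ seg e a l := by
  refine ⟨(x - a).toNat, ?_, ?_⟩
  · simp only [mem_Iio]; omega
  · have : a + ((x - a).toNat : ℤ) = x := by omega
    simp only [this]

lemma of_mem_seg {a : ℤ} {l : ℕ} {y : α} (h : y ∈ seg e a l) :
    ∃ x : ℤ, a ≤ x ∧ x < a + l ∧ y = e (x : ZMod n) := by
  obtain ⟨k, hk, rfl⟩ := h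
  simp only [mem_Iio] at hk
  exact ⟨a + k, by omega, by omega, rfl⟩

lemma seg_subset {a b : ℤ} {l m : ℕ} (h1 : a ≤ b) (h2 : b + m ≤ a + l) :
    seg e b m ⊆ seg e a l := by
  intro y hy
  obtain ⟨x, hx1, hx2, rfl⟩ := of_mem_seg e hy
  exact mem_seg e (by omega) (by omega)

lemma seg_succ (a : ℤ) (l : ℕ) :
    seg e a (l + 1) = insert (e ((a + l : ℤ) : ZMod n)) (seg e a l) := by
  ext y
  constructor
  · intro hy
    obtain ⟨x, hx1, hx2, rfl⟩ := of_mem_seg e hy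
    by_cases h : x = a + l
    · subst h; exact mem_insert _ _
    · exact mem_insert_of_mem _ (mem_seg e hx1 (by push_cast at hx2; omega))
  · rintro (rfl | hy)
    · exact mem_seg e (by omega) (by push_cast; omega)
    · exact seg_subset e le_rfl (by push_cast; omega) hy

lemma seg_pred (a : ℤ) (l : ℕ) :
    seg e (a - 1) (l + 1) = insert (e ((a - 1 : ℤ) : ZMod n)) (seg e a l) := by
  ext y
  constructor
  · intro hy
    obtain ⟨x, hx1, hx2, rfl⟩ := of_mem_seg e hy
    by_cases h : x = a - 1
    · subst h; exact mem_insert _ _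
    · exact mem_insert_of_mem _ (mem_seg e (by omega) (by push_cast at hx2; omega))
  · rintro (rfl | hy)
    · exact mem_seg e (by omega) (by push_cast; omega)
    · exact seg_subset e (by omega) (by push_cast; omega) hy

lemma eq_of_e {e : ZMod n → α} (hinj : Function.Injective e) {x y : ℤ}
    (h : e (x : ZMod n) = e (y : ZMod n)) (h1 : x < y + n) (h2 : y < x + n) : x = y := by
  have h3 := hinj h
  rw [ZMod.intCast_eq_intCast_iff_dvd_sub] at h3
  have := Int.eq_zero_of_abs_lt_dvd h3 (by rw [abs_lt]; constructor <;> omega)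
  omega

lemma seg_disj {e : ZMod n → α} (hinj : Function.Injective e) {a b : ℤ} {l m : ℕ}
    (h1 : a + l ≤ b) (h2 : b + m ≤ a + n) : Disjoint (seg e a l) (seg e b m) := by
  rw [Set.disjoint_left]
  intro y hy hy'
  obtain ⟨x, hx1, hx2, rfl⟩ := of_mem_seg e hy
  obtain ⟨z, hz1, hz2, h⟩ := of_mem_seg e hy'
  have := eq_of_e hinj h (by omega) (by omega)
  omega

lemma seg_shift (a : ℤ) (l : ℕ) (k : ℤ) : seg e (a + n * k) l = seg e a l := by
  unfold seg
  congr 1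
  ext j
  push_cast
  simp

lemma seg_ncard {e : ZMod n → α} (hinj : Function.Injective e) (a : ℤ) (l : ℕ) (hl : l ≤ n) :
    (seg e a l).ncard = l := by
  unfold seg
  rw [Set.ncard_image_of_injOn]
  · simp [Set.ncard_eq_toFinset_card']
  · intro x hx y hy h
    simp only [mem_Iio] at hx hy
    have := eq_of_e hinj h (by omega) (by omega)
    omega

end segs

/-- Windows at all odd integer positions. -/
def Win {n : ℕ} (N : Matroid α) (t : ℕ) (e : ZMod n → α) : Prop :=
  ∀ s : ℤ, Odd s → N.IsCircuit (seg e s t) ∧ N✶.IsCircuit (seg e s t)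

lemma Win.dual {n : ℕ} {N : Matroid α} {t : ℕ} {e : ZMod n → α} (h : Win N t e) :
    Win N✶ t e := by
  intro s hs
  rw [Matroid.dual_dual]
  exact (h s hs).symm

section core
variable {n : ℕ} {N : Matroid α} {u : ℕ} {e : ZMod n → α}

lemma rk_small (hinj : Function.Injective e) (hE : N.E.Finite) (hn : 2 * u + 2 + 1 ≤ n)
    (hW : Win N (2 * u + 2) e) (a : ℤ) (l : ℕ) (hl : l ≤ 2 * u + 1) :
    rkf N (seg e a l) = l := by
  rw [rkf_indep N hE, seg_ncard hinj a l (by omega)]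
  rcases Int.even_or_odd a with ha | ha
  · have h := (hW (a - 1) (by simpa using ha.sub_odd odd_one)).1
    refine h.ssubset_indep ⟨seg_subset e (by omega) (by push_cast; omega), fun hs => ?_⟩
    have := Set.ncard_le_ncard hs (Set.toFinite _ |>.image _)
    rw [seg_ncard hinj _ _ (by omega), seg_ncard hinj _ _ (by omega)] at this
    omega
  · have h := (hW a ha).1
    refine h.ssubset_indep ⟨seg_subset e (by omega) (by push_cast; omega), fun hs => ?_⟩
    have := Set.ncard_le_ncard hs (Set.toFinite _ |>.image _)
    rw [seg_ncard hinj _ _ (by omega), seg_ncard hinj _ _ (by omega)] at this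
    omega

lemma rk_right (hinj : Function.Injective e) (hE : N.E.Finite)
    (hW : Win N (2 * u + 2) e) (a : ℤ) (l : ℕ) (ha : Odd (a + l))
    (hl : l + (2 * u + 2) ≤ n) :
    rkf N (seg e a (l + 1)) = rkf N (seg e a l) + 1 := by
  rw [seg_succ]
  exact rkf_insert_cocircuit N hE (hW _ ha).2 (mem_seg e le_rfl (by push_cast; omega))
    (seg_disj hinj le_rfl (by push_cast; omega))

lemma rk_left (hinj : Function.Injective e) (hE : N.E.Finite)
    (hW : Win N (2 * u + 2) e) (a : ℤ) (l : ℕ) (ha : Odd a)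
    (hl : l + (2 * u + 2) ≤ n) :
    rkf N (seg e (a - 1) (l + 1)) = rkf N (seg e a l) + 1 := by
  rw [seg_pred]
  refine rkf_insert_cocircuit N hE (hW (a - (2 * u + 2 : ℕ)) ?_).2
    (mem_seg e (by push_cast; omega) (by push_cast; omega))
    (seg_disj hinj (by push_cast; omega) (by push_cast; omega)).symm
  obtain ⟨k, rfl⟩ := ha
  exact ⟨k - u - 1, by push_cast; ring⟩

lemma rk_even (hinj : Function.Injective e) (hE : N.E.Finite) (hn : 2 * u + 2 + 1 ≤ n)
    (hW : Win N (2 * u + 2) e) (a : ℤ) (ha : Odd a) (m : ℕ)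
    (hl : 2 * u + 2 * m + (2 * u + 2) ≤ n + 2) :
    rkf N (seg e a (2 * u + 2 * m)) = 2 * u + m := by
  induction m with
  | zero => simpa using rk_small hinj hE hn hW a (2 * u) (by omega)
  | succ m ih =>
    have e1 : 2 * u + 2 * (m + 1) = (2 * u + 2 * m + 1) + 1 := by ring
    rw [e1, seg_succ]
    obtain ⟨k, rfl⟩ := ha
    rw [rkf_insert_circuit N hE (hW (2 * k + 1 + 2 * m) ⟨k + m, by ring⟩).1, rk_right hinj hE hW,
      ih (by omega)]
    · ring
    · exact ⟨k + u + m, by push_cast; ring⟩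
    · omega
    · exact mem_seg e (by push_cast; omega) (by push_cast; omega)
    · rw [← seg_succ]
      exact seg_subset e (by omega) (by push_cast; omega)

end core

lemma even_n {M : Matroid α} {u n : ℕ} {e : ZMod n → α} (he : EvenTCycOrd M (2 * u + 2) e) :
    Even n := by
  by_contra hodd
  rw [Nat.not_even_iff_odd] at hodd
  obtain ⟨⟨hinj, hrange⟩, hn, hw⟩ := he
  have hE : M.E.ncard = n := by
    rw [← hrange, ← Set.image_univ, Set.ncard_image_of_injective _ hinj, Set.ncard_univ,
      Nat.card_zmod]
  have hEf : M.E.Finite := Set.finite_of_ncard_pos (by omega)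
  obtain ⟨c1, k1, d1⟩ := hw 1 odd_one le_rfl (by omega)
  have c1' : M.IsCircuit _ := c1
  have k1' : M✶.IsCircuit _ := k1
  have hx : e ((1 : ℤ) : ZMod n) ∈ seg e ((1 : ℕ) : ℤ) (2 * u + 2) :=
    mem_seg e (by simp) (by push_cast; omega)
  have i1 := (c1'.sdiff_singleton_indep hx).encard_le_eRank
  have i2 := (k1'.sdiff_singleton_indep hx).encard_le_eRank
  have hfin := hEf.subset c1'.subset_ground
  have hc : (seg e ((1 : ℕ) : ℤ) (2 * u + 2) \ {e ((1 : ℤ) : ZMod n)}).encard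
      = ((2 * u + 1 : ℕ) : ℕ∞) := by
    rw [← hfin.sdiff.cast_ncard_eq, Set.ncard_sdiff_singleton_of_mem hx, d1]
    rfl
  have h := add_le_add i1 i2
  rw [M.eRank_add_eRank_dual, hc, ← hEf.cast_ncard_eq, hE] at h
  have h' : (2 * u + 1) + (2 * u + 1) ≤ n := by exact_mod_cast h
  obtain ⟨v, hv⟩ := hodd
  obtain ⟨-, k2, -⟩ := hw (n - 2 * u) ⟨v - u, by omega⟩ (by omega) (by omega)
  have k2' : M✶.IsCircuit _ := k2
  apply c1'.inter_isCocircuit_ne_singleton (e := e ((1 : ℤ) : ZMod n)) k2'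
  ext y
  simp only [mem_inter_iff, mem_singleton_iff]
  constructor
  · rintro ⟨h1, h2⟩
    obtain ⟨x, hx1, hx2, rfl⟩ := of_mem_seg e h1
    obtain ⟨z, hz1, hz2, hxz⟩ := of_mem_seg e h2
    by_cases hz : z = n + 1
    · rw [hxz, hz]; push_cast; simp
    · have := eq_of_e hinj hxz (by push_cast at *; omega) (by push_cast at *; omega)
      push_cast at *
      omega
  · rintro rfl
    refine ⟨hx, ?_⟩
    have : e ((1 : ℤ) : ZMod n) = e (((n : ℤ) + 1 : ℤ) : ZMod n) := by push_cast; simp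
    rw [this]
    exact mem_seg e (by omega) (by push_cast; omega)

lemma win_of {M : Matroid α} {u n : ℕ} {e : ZMod n → α} (he : EvenTCycOrd M (2 * u + 2) e) :
    Win M (2 * u + 2) e := by
  obtain ⟨v, hv⟩ := even_n he
  obtain ⟨-, hn, hw⟩ := he
  intro s hs
  obtain ⟨w, rfl⟩ := hs
  have h0 : 0 ≤ (2 * w + 1) % (n : ℤ) := Int.emod_nonneg _ (by omega)
  have h1 : (2 * w + 1) % (n : ℤ) < n := Int.emod_lt_of_pos _ (by omega)
  have h2 := Int.emod_add_mul_ediv (2 * w + 1) n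
  have h3 : (2 * w + 1) % (n : ℤ) % 2 = 1 := by
    rw [Int.emod_emod_of_dvd _ ⟨v, by omega⟩]; omega
  generalize (2 * w + 1) % (n : ℤ) = r at *
  lift r to ℕ using h0
  obtain ⟨a, b, -⟩ := hw r (Nat.odd_iff.2 (by omega)) (by omega) (by omega)
  rw [← h2, seg_shift]
  exact ⟨a, b⟩

/-- Let `t` be an even positive integer and `e` an even `t`-cyclic
ordering of `M`. For every `i ∈ {1,…,n}` and `1 ≤ j ≤ n/2`, the set
`X = {e_{i+1},…,e_{i+j}}` satisfies: `λ(X) = j` if `j ≤ t-1`; `λ(X) = t-2` if `j > t-1`,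
`j` even, `i` even; `λ(X) = t-1` if `j > t-1`, `j` odd; `λ(X) = t` if `j > t-1`, `j` even,
`i` odd. -/
theorem statement_14 (M : Matroid α) (t n : ℕ) (ht : 1 ≤ t) (hteven : Even t)
    (e : ZMod n → α) (he : EvenTCycOrd M t e) :
    ∀ i : ℕ, 1 ≤ i → i ≤ n → ∀ j : ℕ, 1 ≤ j → 2 * j ≤ n →
      (j ≤ t - 1 → lam M (seg e ((i : ℤ) + 1) j) = (j : ℤ)) ∧
      (t - 1 < j → Even j → Even i → lam M (seg e ((i : ℤ) + 1) j) = (t : ℤ) - 2) ∧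
      (t - 1 < j → Odd j → lam M (seg e ((i : ℤ) + 1) j) = (t : ℤ) - 1) ∧
      (t - 1 < j → Even j → Odd i → lam M (seg e ((i : ℤ) + 1) j) = (t : ℤ)) := by
  intro i hi1 hi2 j hj1 hj2
  obtain ⟨w, hw⟩ := hteven
  obtain ⟨u, rfl⟩ : ∃ u, t = 2 * u + 2 := ⟨w - 1, by omega⟩
  have hW := win_of he
  obtain ⟨⟨hinj, hrange⟩, hn, -⟩ := he
  have hE : M.E.Finite := by
    haveI : NeZero n := ⟨by omega⟩
    rw [← hrange]; exact Set.finite_range e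
  have hlam : ∀ (a : ℤ) (r : ℕ), (∀ N : Matroid α, N.E.Finite → Win N (2 * u + 2) e →
      rkf N (seg e a j) = r) → lam M (seg e a j) = 2 * (r : ℤ) - j := by
    intro a r h
    unfold lam
    rw [h M hE hW, h M✶ hE hW.dual, seg_ncard hinj a j (by omega)]
    ring
  refine ⟨fun hj => ?_, fun hj hje hie => ?_, fun hj hjo => ?_, fun hj hje hio => ?_⟩
  · rw [hlam _ j fun N hN hWN => rk_small hinj hN hn hWN _ _ (by omega)]
    ring
  · obtain ⟨p, hp⟩ := hje
    obtain ⟨q, hq⟩ := hie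
    obtain ⟨m, rfl⟩ : ∃ m, j = 2 * u + 2 * m := ⟨p - u, by omega⟩
    rw [hlam _ (2 * u + m) fun N hN hWN =>
      rk_even hinj hN hn hWN _ ⟨q, by push_cast [hq]; ring⟩ m (by omega)]
    push_cast; ring
  · obtain ⟨p, hp⟩ := hjo
    obtain ⟨m, rfl⟩ : ∃ m, j = 2 * u + 2 * m + 1 := ⟨p - u, by omega⟩
    rw [hlam _ (2 * u + m + 1)]
    · push_cast; ring
    intro N hN hWN
    rcases Nat.even_or_odd i with hi | hi
    · obtain ⟨q, hq⟩ := hi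
      have ho : Odd ((i : ℤ) + 1) := ⟨q, by push_cast [hq]; ring⟩
      rw [rk_right hinj hN hWN _ _ ⟨q + u + m, by push_cast [hq]; ring⟩ (by omega),
        rk_even hinj hN hn hWN _ ho m (by omega)]
    · obtain ⟨q, hq⟩ := hi
      have ho : Odd ((i : ℤ) + 2) := ⟨q + 1, by push_cast [hq]; ring⟩
      have h1 : (i : ℤ) + 1 = (i + 2) - 1 := by ring
      rw [h1, rk_left hinj hN hWN _ _ ho (by omega), rk_even hinj hN hn hWN _ ho m (by omega)]
  · obtain ⟨p, hp⟩ := hje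
    obtain ⟨q, hq⟩ := hio
    obtain ⟨m, rfl⟩ : ∃ m, j = 2 * u + 2 * m + 1 + 1 := ⟨p - u - 1, by omega⟩
    rw [hlam _ (2 * u + m + 1 + 1)]
    · push_cast; ring
    intro N hN hWN
    have ho : Odd ((i : ℤ) + 2) := ⟨q + 1, by push_cast [hq]; ring⟩
    have h1 : (i : ℤ) + 1 = (i + 2) - 1 := by ring
    rw [h1, rk_left hinj hN hWN _ _ ho (by omega),
      rk_right hinj hN hWN _ _ ⟨q + 1 + u + m, by push_cast [hq]; ring⟩ (by omega),
      rk_even hinj hN hn hWN _ ho m (by omega)]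

end CyclicArr
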